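/- Let 0 < φ < 1, let f be the density of an absolutely continuous nonnegative random variable Z with distribution function F satisfying F(0) = 0, let v : [0,∞) → ℝ be locally bounded, and let m be the locally bounded solution of the defective renewal equation m(u) = φ ∫₀^u m(u−y) f(y) dy + v(u) for u ≥ 0. Assume F and v belong to C²₀([0,∞)). Define w₁(u) := φ m(0) f(u) + v'(u) and w₂(u) := φ m'(0) f(u) + w₁'(u), where m(0) = v(0) and m'(0) = φ v(0) f(0) + v'(0). Then for all u > 0: m'(u) = φ ∫₀^u m'(u−y) f(y) dy + w₁(u), and m''(u) = φ ∫₀^u m''(u−y) f(y) dy + w₂(u). -/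

import Mathlib

open MeasureTheory Filter Topology

/-!
After extending `f` and `v` to all of `ℝ` with their smoothness, the equation reads
`m = m ⋆ k + v` on `[0, ∞)`, with `k = φ f` and `⋆` the convolution on `[0, u]`.

* *Measurability.* The integral is zero wherever its integrand is not integrable, so the equation
  does not make `m` measurable by fiat. Since `k` is continuous, however, the set of `u` at which
  the integrand is not a.e.-measurable is open, and off it `m` may be replaced by a measurable
  function. Hence `m - v`, and with it `m`, is measurable.
* *Bootstrapping.* Convolving a locally integrable function with a continuous one gives a continuous
  function, and convolving with a `C^(n+1)` function improves `C^n` to `C^(n+1)`. Substituting `m`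
  into the right-hand side repeatedly makes it `C²`.
* *Differentiation.* `(m ⋆ k)' = m(0) k + m' ⋆ k` turns the equation for `m` into one for `m'` with
  the forcing term `m(0) k + v'`; doing this twice gives the theorem.
-/

open Set

section Extension

variable {α β : Type*} [TopologicalSpace α] [LinearOrder α] [OrderTopology α]
  [TopologicalSpace β] {a : α}

theorem exists_continuous_eqOn_Ioi [DenselyOrdered α] [NoMaxOrder α] [T3Space β] {g : α → β}
    {L : β} (hg : ContinuousOn g (Ioi a)) (hL : Tendsto g (𝓝[>] a) (𝓝 L)) :
    ∃ G : α → β, Continuous G ∧ EqOn G g (Ioi a) := by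
  have hext : ContinuousOn (extendFrom (Ioi a) g) (Ici a) := by
    refine continuousOn_extendFrom (closure_Ioi a).ge fun x hx ↦ ?_
    rcases (mem_Ici.1 hx).eq_or_lt with rfl | hax
    · exact ⟨L, hL⟩
    · exact ⟨g x, hg x hax⟩
  refine ⟨fun x ↦ extendFrom (Ioi a) g (max a x),
    hext.comp_continuous (by fun_prop) fun x ↦ le_max_left a x, fun x hx ↦ ?_⟩
  simp only [max_eq_right (mem_Ioi.1 hx).le]
  exact extendFrom_extends hg x hx

theorem eq_of_eqOn_Ioi_of_tendsto [DenselyOrdered α] [NoMaxOrder α] [T2Space β]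
    {G g : α → β} {L : β} (hG : ContinuousAt G a) (h : EqOn G g (Ioi a))
    (hL : Tendsto g (𝓝[>] a) (𝓝 L)) : G a = L :=
  tendsto_nhds_unique
    ((hG.mono_left nhdsWithin_le_nhds).congr' h.eventuallyEq_nhdsWithin) hL

end Extension

section Calculus

variable {E : Type*} [NormedAddCommGroup E] [NormedSpace ℝ E]

theorem contDiff_succ_of_hasDerivAt {n : ℕ} {f f' : ℝ → E} (hf : ∀ x, HasDerivAt f (f' x) x)
    (hf' : ContDiff ℝ n f') : ContDiff ℝ (n + 1) f := by
  rw [contDiff_succ_iff_deriv, deriv_eq hf]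
  exact ⟨fun x ↦ (hf x).differentiableAt, by simp, hf'⟩

theorem exists_contDiff_eqOn_Ioi [CompleteSpace E] {a : ℝ} {n : ℕ} {g : ℝ → E} {L : E}
    (hg : ContDiffOn ℝ n g (Ioi a)) (hL : Tendsto (iteratedDeriv n g) (𝓝[>] a) (𝓝 L)) :
    ∃ G : ℝ → E, ContDiff ℝ n G ∧ EqOn G g (Ioi a) := by
  induction n generalizing g with
  | zero => simpa using exists_continuous_eqOn_Ioi hg.continuousOn (by simpa using hL)
  | succ n ih =>
    rw [Nat.cast_succ, contDiffOn_succ_iff_deriv_of_isOpen isOpen_Ioi] at hg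
    obtain ⟨hg_diff, -, hg'⟩ := hg
    obtain ⟨G', hG', hG'g⟩ := ih hg' (by rwa [← iteratedDeriv_succ'])
    let G x := g (a + 1) + ∫ t in (a + 1)..x, G' t
    have hG (x : ℝ) : HasDerivAt G (G' x) x :=
      (hG'.continuous.integral_hasStrictDerivAt (a + 1) x).hasDerivAt.const_add _
    refine ⟨G, mod_cast contDiff_succ_of_hasDerivAt hG hG', ?_⟩
    exact isOpen_Ioi.eqOn_of_deriv_eq (x := a + 1) isPreconnected_Ioi
      (fun x _ ↦ (hG x).differentiableAt.differentiableWithinAt) hg_diff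
      (fun x hx ↦ (hG x).deriv.trans (hG'g hx)) (by simp) (by simp [G])

theorem exists_contDiff_eqOn_Ici [CompleteSpace E] {a : ℝ} {n : ℕ} {g : ℝ → E} {L : E}
    (hg_cont : ContinuousOn g (Ici a)) (hg : ContDiffOn ℝ n g (Ioi a))
    (hL : Tendsto (iteratedDeriv n g) (𝓝[>] a) (𝓝 L)) :
    ∃ G : ℝ → E, ContDiff ℝ n G ∧ EqOn G g (Ici a) := by
  obtain ⟨G, hG, hGg⟩ := exists_contDiff_eqOn_Ioi hg hL
  refine ⟨G, hG, fun x hx ↦ ?_⟩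
  rcases (mem_Ici.1 hx).eq_or_lt with rfl | hax
  · exact eq_of_eqOn_Ioi_of_tendsto hG.continuous.continuousAt hGg
      ((hg_cont a self_mem_Ici).mono_left (nhdsWithin_mono a Ioi_subset_Ici_self))
  · exact hGg hax

section HasDerivAt

variable {s : Set ℝ} {n : ℕ} {f f' : ℝ → E}

theorem contDiffOn_of_hasDerivAt (hs : IsOpen s) (h : ∀ x ∈ s, HasDerivAt f (f' x) x)
    (hf : ContDiffOn ℝ (n + 1) f s) : ContDiffOn ℝ n f' s :=
  ((contDiffOn_succ_iff_deriv_of_isOpen hs).1 hf).2.2.congr fun x hx ↦ (h x hx).deriv.symm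

theorem eqOn_iteratedDeriv_succ_of_hasDerivAt (hs : IsOpen s) (h : ∀ x ∈ s, HasDerivAt f (f' x) x) :
    EqOn (iteratedDeriv (n + 1) f) (iteratedDeriv n f') s := fun x hx ↦ by
  rw [iteratedDeriv_succ']
  exact (Filter.eventuallyEq_of_mem (hs.mem_nhds hx) fun y hy ↦ (h y hy).deriv).iteratedDeriv_eq n

end HasDerivAt

theorem eqOn_deriv_Ici {a : ℝ} {f g : ℝ → E} (h : EqOn f g (Ici a)) (hf : Differentiable ℝ f)
    (hg : Differentiable ℝ g) : EqOn (deriv f) (deriv g) (Ici a) := fun x hx ↦ by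
  have hu : UniqueDiffWithinAt ℝ (Ici a) x := uniqueDiffOn_Ici a x hx
  rw [← (hf x).derivWithin hu, ← (hg x).derivWithin hu, derivWithin_congr h (h hx)]

variable {F F' : ℝ → ℝ → E}

theorem hasDerivAt_intervalIntegral_of_continuous (hF : ∀ x t, HasDerivAt (F · t) (F' x t) x)
    (hFc : ∀ x, Continuous (F x)) (hF' : Continuous (Function.uncurry F')) (a b x : ℝ) :
    HasDerivAt (fun x ↦ ∫ t in a..b, F x t) (∫ t in a..b, F' x t) x := by
  obtain ⟨C, hC⟩ := ((isCompact_closedBall x 1).prod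
    (isCompact_uIcc (a := a) (b := b))).exists_bound_of_continuousOn hF'.continuousOn
  exact (intervalIntegral.hasDerivAt_integral_of_dominated_loc_of_deriv_le
    (bound := fun _ ↦ C) (Metric.closedBall_mem_nhds x one_pos)
    (.of_forall fun y ↦ (hFc y).aestronglyMeasurable) ((hFc x).intervalIntegrable a b)
    (hF'.uncurry_left x).aestronglyMeasurable
    (.of_forall fun t ht y hy ↦ hC (y, t) ⟨hy, uIoc_subset_uIcc ht⟩) intervalIntegrable_const
    (.of_forall fun t _ y _ ↦ hF y t)).2

theorem hasDerivAt_intervalIntegral_diagonal [CompleteSpace E]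
    (hF : ∀ x t, HasDerivAt (F · t) (F' x t) x) (hFc : Continuous (Function.uncurry F))
    (hF' : Continuous (Function.uncurry F')) (a u : ℝ) :
    HasDerivAt (fun u ↦ ∫ t in a..u, F u t) (F u u + ∫ t in a..u, F' u t) u := by
  let toSpan := ContinuousLinearMap.toSpanSingletonCLE (𝕜 := ℝ) (E := E)
  have hF_diff : HasStrictFDerivAt (fun p : ℝ × ℝ ↦ ∫ t in a..p.2, F p.1 t)
      ((toSpan (∫ t in a..u, F' u t)).coprod (toSpan (F u u))) (u, u) := by
    refine hasStrictFDerivAt_uncurry_coprod (u := (u, u)) (f := fun x b ↦ ∫ t in a..b, F x t)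
      (f₁ := fun x b ↦ toSpan (∫ t in a..b, F' x t)) (f₂ := fun x b ↦ toSpan (F x b))
      (.of_forall fun p ↦ ?_) (.of_forall fun p ↦ ?_) ?_ ?_
    · exact (hasDerivAt_intervalIntegral_of_continuous hF hFc.uncurry_left hF'
        a p.2 p.1).hasFDerivAt
    · exact ((hFc.uncurry_left p.1).integral_hasStrictDerivAt a p.2).hasDerivAt.hasFDerivAt
    · exact (toSpan.continuous.comp
        (intervalIntegral.continuous_parametric_primitive_of_continuous hF')).continuousAt
    · exact (toSpan.continuous.comp hFc).continuousAt
  refine (hF_diff.hasFDerivAt.comp_hasDerivAt (f := fun u : ℝ ↦ (u, u)) u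
    ((hasDerivAt_id u).prodMk (hasDerivAt_id u))).congr_deriv ?_
  simp [toSpan, add_comm]

end Calculus

section Measurability

variable {X Y β : Type*} [TopologicalSpace X] [MeasurableSpace X] [MeasurableSpace β]

/-- The largest open set on which `f` is a.e.-measurable (see
`aemeasurable_restrict_aemeasurableLocus`). -/
def aemeasurableLocus (μ : Measure X) (f : X → β) : Set X :=
  ⋃₀ {U | IsOpen U ∧ AEMeasurable f (μ.restrict U)}

theorem isOpen_aemeasurableLocus (μ : Measure X) (f : X → β) : IsOpen (aemeasurableLocus μ f) :=
  isOpen_sUnion fun _ hU ↦ hU.1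

theorem aemeasurable_restrict_aemeasurableLocus [SecondCountableTopology X] (μ : Measure X)
    (f : X → β) : AEMeasurable f (μ.restrict (aemeasurableLocus μ f)) := by
  obtain ⟨T, hT_countable, hT, hT_eq⟩ := TopologicalSpace.isOpen_sUnion_countable
    {U | IsOpen U ∧ AEMeasurable f (μ.restrict U)} fun _ hU ↦ hU.1
  have := hT_countable.to_subtype
  rw [aemeasurableLocus, ← hT_eq, sUnion_eq_iUnion, aemeasurable_iUnion_iff]
  exact fun U ↦ (hT U.2).2

theorem support_subset_aemeasurableLocus_of_mul [OpensMeasurableSpace X] {μ : Measure X}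
    {f k : X → ℝ} (hk : Measurable k) (hk_open : IsOpen (Function.support k))
    (h : AEMeasurable (fun x ↦ f x * k x) μ) : Function.support k ⊆ aemeasurableLocus μ f := by
  refine subset_sUnion_of_mem ⟨hk_open, (h.restrict.div hk.aemeasurable).congr ?_⟩
  filter_upwards [ae_restrict_mem hk_open.measurableSet] with x hx
  exact mul_div_cancel_right₀ (f x) hx

theorem exists_measurable_forall_mul_ae_eq [SecondCountableTopology X] [OpensMeasurableSpace X]
    (μ : Measure X) (f : X → ℝ) : ∃ g : X → ℝ, Measurable g ∧ ∀ k : X → ℝ,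
      Function.support k ⊆ aemeasurableLocus μ f →
        (fun x ↦ f x * k x) =ᵐ[μ] fun x ↦ g x * k x := by
  have hf := aemeasurable_restrict_aemeasurableLocus μ f
  refine ⟨hf.mk f, hf.measurable_mk, fun k hk ↦ ?_⟩
  filter_upwards [(ae_restrict_iff' (isOpen_aemeasurableLocus μ f).measurableSet).1 hf.ae_eq_mk]
    with x hx
  by_cases hkx : k x = 0
  · simp [hkx]
  · rw [hx (hk hkx)]

-- The function `f` is arbitrary: where the integrand is not a.e.-measurable, the integral is zero.
theorem measurable_integral_mul_of_isOpen_ne_zero [SecondCountableTopology X]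
    [OpensMeasurableSpace X] [TopologicalSpace Y] [MeasurableSpace Y] [OpensMeasurableSpace Y]
    {μ : Measure X} [SFinite μ] (f : X → ℝ) {K : Y → X → ℝ} (hK : Measurable (Function.uncurry K))
    (hK_open : IsOpen {p : Y × X | K p.1 p.2 ≠ 0}) :
    Measurable fun y ↦ ∫ x, f x * K y x ∂μ := by
  let T : Set Y := {y | Function.support (K y) ⊆ aemeasurableLocus μ f}
  have hT : IsClosed T := by
    have hT_eq : T = ⋂ x ∈ (aemeasurableLocus μ f)ᶜ, {y | K y x ≠ 0}ᶜ := by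
      ext y
      simp only [T, mem_ofPred_eq, mem_iInter, mem_compl_iff, subset_def, Function.mem_support]
      exact forall_congr' fun x ↦ not_imp_not.symm
    rw [hT_eq]
    exact isClosed_biInter fun x _ ↦
      (hK_open.preimage (by fun_prop : Continuous fun y : Y ↦ (y, x))).isClosed_compl
  obtain ⟨g, hg, hfg⟩ := exists_measurable_forall_mul_ae_eq μ f
  have hg_int : Measurable fun y ↦ ∫ x, g x * K y x ∂μ :=
    (((hg.comp measurable_snd).mul hK).stronglyMeasurable.integral_prod_right).measurable
  convert hg_int.indicator hT.measurableSet using 1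
  funext y
  by_cases hy : y ∈ T
  · rw [indicator_of_mem hy, integral_congr_ae (hfg (K y) hy)]
  · rw [indicator_of_notMem hy]
    refine integral_undef fun h_int ↦ hy ?_
    exact support_subset_aemeasurableLocus_of_mul hK.of_uncurry_left
      (hK_open.preimage (by fun_prop : Continuous fun x : X ↦ (y, x))) h_int.aemeasurable

theorem intervalIntegrable_indicator_Ioi {m : ℝ → ℝ} (hm : Measurable ((Ioi 0).indicator m))
    (hm_bdd : ∀ x, 0 < x → ∃ B, ∀ u ∈ Icc 0 x, |m u| ≤ B) (a b : ℝ) :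
    IntervalIntegrable ((Ioi 0).indicator m) volume a b := by
  obtain ⟨B, hB⟩ := hm_bdd (max 1 (max a b)) (by positivity)
  refine (intervalIntegrable_const (c := B)).mono_fun hm.aestronglyMeasurable ?_
  filter_upwards [ae_restrict_mem measurableSet_uIoc] with u hu
  by_cases hu0 : u ∈ Ioi 0
  · rw [indicator_of_mem hu0]
    exact (hB u ⟨hu0.le, hu.2.trans (le_max_right _ _)⟩).trans (le_abs_self B)
  · rw [indicator_of_notMem hu0, norm_zero]
    positivity

end Measurability

/-- The convolution on `[0, u]` of two functions on the half-line `[0, ∞)`. -/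
noncomputable def causalConv (f g : ℝ → ℝ) (u : ℝ) : ℝ :=
  ∫ y in (0 : ℝ)..u, f (u - y) * g y

section CausalConv

variable {f f₁ g g₁ : ℝ → ℝ} {u : ℝ}

theorem causalConv_eq_integral_mul_sub (f g : ℝ → ℝ) (u : ℝ) :
    causalConv f g u = ∫ s in (0 : ℝ)..u, f s * g (u - s) := by
  simpa [causalConv] using
    intervalIntegral.integral_comp_sub_left (a := 0) (b := u) (fun s ↦ f s * g (u - s)) u

theorem causalConv_comm (f g : ℝ → ℝ) : causalConv f g = causalConv g f := by
  funext u
  rw [causalConv_eq_integral_mul_sub, causalConv]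
  simp only [mul_comm]

theorem causalConv_smul (f g : ℝ → ℝ) (c u : ℝ) :
    causalConv f (c • g) u = c * causalConv f g u := by
  simp only [causalConv, ← intervalIntegral.integral_const_mul, Pi.smul_apply, smul_eq_mul,
    mul_left_comm]

theorem causalConv_congr (hf : EqOn f f₁ (Ioi 0)) (hg : EqOn g g₁ (Ioi 0)) (hu : 0 ≤ u) :
    causalConv f g u = causalConv f₁ g₁ u := by
  simp only [causalConv, intervalIntegral.integral_of_le hu, integral_Ioc_eq_integral_Ioo]
  refine setIntegral_congr_fun measurableSet_Ioo fun y hy ↦ ?_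
  simp only [hf (sub_pos.2 hy.2), hg hy.1]

theorem measurable_indicator_causalConv (f : ℝ → ℝ) (hg : Continuous g) :
    Measurable ((Ioi 0).indicator (causalConv f g)) := by
  let S : Set (ℝ × ℝ) := {p | 0 < p.2 ∧ p.2 < p.1}
  let K : ℝ × ℝ → ℝ := S.indicator fun p ↦ g (p.1 - p.2)
  have hS : IsOpen S :=
    (isOpen_lt continuous_const continuous_snd).inter (isOpen_lt continuous_snd continuous_fst)
  have hg_sub : Continuous fun p : ℝ × ℝ ↦ g (p.1 - p.2) := by fun_prop
  have hK_open : IsOpen (Function.support K) := by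
    rw [support_indicator]
    exact hS.inter hg_sub.isOpen_support
  have hK_int : Measurable fun u ↦ ∫ s, f s * K (u, s) :=
    measurable_integral_mul_of_isOpen_ne_zero f (hg_sub.measurable.indicator hS.measurableSet)
      hK_open
  convert hK_int.indicator (measurableSet_Ioi (a := (0 : ℝ))) using 1
  refine indicator_congr fun u hu ↦ ?_
  have hK_eq (s : ℝ) : f s * K (u, s) = (Ioo 0 u).indicator (fun s ↦ f s * g (u - s)) s :=
    (indicator_mul_right (Ioo 0 u) f fun s ↦ g (u - s)).symm
  simp only [hK_eq, integral_indicator measurableSet_Ioo]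
  rw [← integral_Ioc_eq_integral_Ioo, ← intervalIntegral.integral_of_le (mem_Ioi.1 hu).le,
    causalConv_eq_integral_mul_sub]

theorem continuous_causalConv (hf : ∀ a b, IntervalIntegrable f volume a b) (hg : Continuous g) :
    Continuous (causalConv f g) := by
  suffices h : ∀ u₀,
      ContinuousAt (fun p : ℝ × ℝ ↦ ∫ s in (0 : ℝ)..p.2, f s * g (p.1 - s)) (u₀, u₀) by
    rw [funext (causalConv_eq_integral_mul_sub f g), continuous_iff_continuousAt]
    exact fun u₀ ↦ (h u₀).comp (f := fun u : ℝ ↦ (u, u)) (by fun_prop)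
  intro u₀
  let a := min 0 u₀ - 1
  let b := max 0 u₀ + 1
  obtain ⟨C, hC⟩ := ((isCompact_closedBall u₀ 1).prod
    (isCompact_uIcc (a := a) (b := b))).exists_bound_of_continuousOn
    (by fun_prop : Continuous fun p : ℝ × ℝ ↦ g (p.1 - p.2)).continuousOn
  refine intervalIntegral.continuousAt_parametric_primitive_of_dominated
    (F := fun x s ↦ f s * g (x - s)) (fun s ↦ |f s| * C) a b (fun x ↦ ?_) ?_
    ((hf a b).abs.mul_const C) (.of_forall fun s ↦ by fun_prop)
    ⟨by grind, by grind⟩ ⟨by grind, by grind⟩ Real.volume_singleton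
  · exact (hf a b).aestronglyMeasurable_restrict_uIoc.mul
      (by fun_prop : Continuous fun s ↦ g (x - s)).aestronglyMeasurable
  · filter_upwards [Metric.closedBall_mem_nhds u₀ one_pos] with x hx
    filter_upwards [ae_restrict_mem measurableSet_uIoc] with s hs
    rw [norm_mul, Real.norm_eq_abs]
    gcongr
    exact hC (x, s) ⟨hx, uIoc_subset_uIcc hs⟩

theorem hasDerivAt_causalConv (hf : ContDiff ℝ 1 f) (hg : Continuous g) (u : ℝ) :
    HasDerivAt (causalConv f g) (f 0 * g u + causalConv (deriv f) g u) u := by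
  have hderiv (x y : ℝ) : HasDerivAt (fun x ↦ f (x - y) * g y) (deriv f (x - y) * g y) x :=
    ((hf.differentiable one_ne_zero (x - y)).hasDerivAt.comp_sub_const x y).mul_const (g y)
  exact (hasDerivAt_intervalIntegral_diagonal hderiv
    ((hf.continuous.comp continuous_sub).mul (hg.comp continuous_snd))
    ((hf.continuous_deriv_one.comp continuous_sub).mul (hg.comp continuous_snd)) 0 u).congr_deriv
    (by simp only [sub_self, causalConv])

theorem contDiff_causalConv {n : ℕ} (hf : ContDiff ℝ (n + 1) f) (hg : ContDiff ℝ n g) :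
    ContDiff ℝ (n + 1) (causalConv f g) := by
  induction n generalizing f with
  | zero =>
    refine contDiff_succ_of_hasDerivAt (hasDerivAt_causalConv (by simpa using hf) hg.continuous) ?_
    have hf' : Continuous (deriv f) := hf.deriv'.continuous
    exact contDiff_zero.2 ((continuous_const.mul hg.continuous).add
      (continuous_causalConv hf'.intervalIntegrable hg.continuous))
  | succ n ih =>
    refine contDiff_succ_of_hasDerivAt (hasDerivAt_causalConv (hf.of_le ?_) hg.continuous) ?_
    · simp
    · exact (contDiff_const.mul hg).add (ih hf.deriv' (hg.of_le (by simp)))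

theorem contDiff_causalConv_add_two {n : ℕ} (hf : ContDiff ℝ (n + 1) f)
    (hg : ContDiff ℝ (n + 1) g) : ContDiff ℝ (n + 2) (causalConv f g) := by
  refine mod_cast contDiff_succ_of_hasDerivAt (n := n + 1)
    (hasDerivAt_causalConv (hf.of_le (by simp)) hg.continuous) ?_
  rw [causalConv_comm]
  exact mod_cast (contDiff_const.mul hg).add (contDiff_causalConv hg hf.deriv')

end CausalConv

/-- `m` solves, on `[0, ∞)`, the renewal equation with kernel `k` and forcing term `v`. The factor
`φ` of a defective renewal equation is part of the kernel: `k = φ • f`. -/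
def SolvesRenewal (k v m : ℝ → ℝ) : Prop :=
  EqOn m (causalConv m k + v) (Ici 0)

namespace SolvesRenewal

variable {k k₁ v v₁ m m₁ : ℝ → ℝ}

theorem apply_zero (h : SolvesRenewal k v m) : m 0 = v 0 := by
  simpa [causalConv] using h self_mem_Ici

theorem eqOn_of_eqOn (h : SolvesRenewal k v m) (hm : EqOn m₁ m (Ioi 0)) :
    EqOn (causalConv m₁ k + v) m (Ici 0) := fun u hu ↦ by
  rw [h hu, Pi.add_apply, Pi.add_apply, causalConv_congr hm (eqOn_refl k _) hu]

theorem congr (h : SolvesRenewal k v m) (hk : EqOn k k₁ (Ioi 0)) (hv : EqOn v v₁ (Ici 0))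
    (hm : EqOn m m₁ (Ici 0)) : SolvesRenewal k₁ v₁ m₁ := fun u hu ↦ by
  rw [← hm hu, h hu, Pi.add_apply, Pi.add_apply, hv hu,
    causalConv_congr (hm.mono Ioi_subset_Ici_self) hk hu]

theorem measurable_indicator (h : SolvesRenewal k v m) (hk : Continuous k) (hv : Continuous v) :
    Measurable ((Ioi 0).indicator m) := by
  rw [indicator_congr (h.mono Ioi_subset_Ici_self), indicator_add']
  exact (measurable_indicator_causalConv m hk).add (hv.measurable.indicator measurableSet_Ioi)

theorem exists_contDiff {n : ℕ} (h : SolvesRenewal k v m)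
    (hm : ∀ a b, IntervalIntegrable ((Ioi 0).indicator m) volume a b)
    (hk : ContDiff ℝ n k) (hv : ContDiff ℝ n v) :
    ∃ M : ℝ → ℝ, ContDiff ℝ n M ∧ EqOn M m (Ici 0) := by
  induction n with
  | zero =>
    exact ⟨_, contDiff_zero.2 ((continuous_causalConv hm hk.continuous).add hv.continuous),
      h.eqOn_of_eqOn eqOn_indicator⟩
  | succ n ih =>
    obtain ⟨M, hM, hMm⟩ := ih (hk.of_le (by simp)) (hv.of_le (by simp))
    refine ⟨causalConv M k + v, ContDiff.add ?_ hv,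
      h.eqOn_of_eqOn (hMm.mono Ioi_subset_Ici_self)⟩
    rw [causalConv_comm]
    exact mod_cast contDiff_causalConv hk hM

theorem exists_contDiff_add_two {n : ℕ} (h : SolvesRenewal k v m)
    (hm : ∀ a b, IntervalIntegrable ((Ioi 0).indicator m) volume a b)
    (hk : ContDiff ℝ (n + 1) k) (hv : ContDiff ℝ (n + 2) v) :
    ∃ M : ℝ → ℝ, ContDiff ℝ (n + 2) M ∧ EqOn M m (Ici 0) := by
  obtain ⟨M, hM, hMm⟩ := h.exists_contDiff (n := n + 1) hm (mod_cast hk)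
    (hv.of_le (by norm_cast; lia))
  exact ⟨causalConv M k + v, (contDiff_causalConv_add_two (mod_cast hM) hk).add hv,
    h.eqOn_of_eqOn (hMm.mono Ioi_subset_Ici_self)⟩

protected theorem deriv (h : SolvesRenewal k v m) (hk : Continuous k) (hv : ContDiff ℝ 1 v)
    (hm : ContDiff ℝ 1 m) : SolvesRenewal k (v 0 • k + deriv v) (deriv m) := fun u hu ↦ by
  have hv_diff := hv.differentiable one_ne_zero
  have hderiv (x : ℝ) := (hasDerivAt_causalConv hm hk x).add (hv_diff x).hasDerivAt
  rw [eqOn_deriv_Ici h (hm.differentiable one_ne_zero) (fun x ↦ (hderiv x).differentiableAt) hu,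
    (hderiv u).deriv, h.apply_zero]
  simp only [Pi.add_apply, Pi.smul_apply, smul_eq_mul]
  ring

theorem exists_contDiff_two_solvesRenewal_deriv (h : SolvesRenewal k v m)
    (hm : ∀ x, 0 < x → ∃ B, ∀ u ∈ Icc 0 x, |m u| ≤ B) (hk : ContDiff ℝ 1 k) (hv : ContDiff ℝ 2 v) :
    ∃ M : ℝ → ℝ, ContDiff ℝ 2 M ∧ EqOn M m (Ici 0) ∧
      SolvesRenewal k (v 0 • k + deriv v) (deriv M) ∧
      SolvesRenewal k ((v 0 * k 0 + deriv v 0) • k + deriv (v 0 • k + deriv v))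
        (deriv (deriv M)) := by
  have hm_int := intervalIntegrable_indicator_Ioi
    (h.measurable_indicator hk.continuous hv.continuous) hm
  obtain ⟨M, hM, hMm⟩ := h.exists_contDiff_add_two (n := 0) hm_int (by simpa using hk)
    (by simpa using hv)
  have hM : ContDiff ℝ 2 M := by simpa using hM
  have hMsol : SolvesRenewal k v M := h.congr (eqOn_refl _ _) (eqOn_refl _ _) hMm.symm
  have hM'sol := hMsol.deriv hk.continuous (hv.of_le one_le_two) (hM.of_le one_le_two)
  exact ⟨M, hM, hMm, hM'sol,
    hM'sol.deriv hk.continuous ((hk.const_smul (v 0)).add hv.deriv') hM.deriv'⟩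

theorem apply_eq_mul_integral {φ u : ℝ} (h : SolvesRenewal (φ • k) v m) (hk : EqOn k k₁ (Ioi 0))
    (hv : EqOn v v₁ (Ioi 0)) (hm : EqOn m m₁ (Ioi 0)) (hu : 0 < u) :
    m₁ u = φ * (∫ y in (0 : ℝ)..u, m₁ (u - y) * k₁ y) + v₁ u := by
  rw [← hm hu, h hu.le, Pi.add_apply, hv hu, causalConv_smul, causalConv_congr hm hk hu.le,
    causalConv]

end SolvesRenewal

theorem stmt_4_general (φ : ℝ) (f v m : ℝ → ℝ)
    (hf_cd : ContDiffOn ℝ 1 f (Ioi 0))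
    (hf_lim : ∃ L, Tendsto (iteratedDeriv 1 f) (𝓝[>] (0 : ℝ)) (𝓝 L))
    (hv_c : ContinuousOn v (Ici 0)) (hv_cd : ContDiffOn ℝ 2 v (Ioi 0))
    (hv_lim : ∃ L, Tendsto (iteratedDeriv 2 v) (𝓝[>] (0 : ℝ)) (𝓝 L))
    (hm_loc : ∀ x : ℝ, 0 < x → ∃ M, ∀ u ∈ Icc (0 : ℝ) x, |m u| ≤ M)
    (hm_eq : ∀ u : ℝ, 0 ≤ u → m u = φ * (∫ y in (0 : ℝ)..u, m (u - y) * f y) + v u)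
    (f0 v'0 : ℝ)
    (hf0 : Tendsto f (𝓝[>] (0 : ℝ)) (𝓝 f0))
    (hv'0 : Tendsto (deriv v) (𝓝[>] (0 : ℝ)) (𝓝 v'0))
    (w₁ w₂ : ℝ → ℝ)
    (hw₁ : ∀ u : ℝ, 0 < u → w₁ u = φ * v 0 * f u + deriv v u)
    (hw₂ : ∀ u : ℝ, 0 < u → w₂ u = φ * (φ * v 0 * f0 + v'0) * f u + deriv w₁ u) :
    ContDiffOn ℝ 2 m (Ioi 0) ∧ ∀ u : ℝ, 0 < u →
      (deriv m u = φ * (∫ y in (0 : ℝ)..u, deriv m (u - y) * f y) + w₁ u) ∧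
      (iteratedDeriv 2 m u
        = φ * (∫ y in (0 : ℝ)..u, iteratedDeriv 2 m (u - y) * f y) + w₂ u) := by
  obtain ⟨K, hK, hKf⟩ := exists_contDiff_eqOn_Ioi (mod_cast hf_cd) hf_lim.choose_spec
  obtain ⟨V, hV, hVv⟩ := exists_contDiff_eqOn_Ici hv_c (mod_cast hv_cd) hv_lim.choose_spec
  have hV'v : EqOn (deriv V) (deriv v) (Ioi 0) :=
    (hVv.mono Ioi_subset_Ici_self).deriv isOpen_Ioi
  have hV0 : V 0 = v 0 := hVv self_mem_Ici
  have hK0 : K 0 = f0 := eq_of_eqOn_Ioi_of_tendsto hK.continuous.continuousAt hKf hf0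
  have hV'0 : deriv V 0 = v'0 :=
    eq_of_eqOn_Ioi_of_tendsto (hV.continuous_deriv (by simp)).continuousAt hV'v hv'0
  have hm_sol : SolvesRenewal (φ • f) v m := fun u hu ↦ by
    rw [hm_eq u hu, Pi.add_apply, causalConv_smul, causalConv]
  have hm_sol_ext : SolvesRenewal (φ • K) V m :=
    hm_sol.congr (hKf.symm.comp_left (g := (φ • ·))) hVv.symm (eqOn_refl _ _)
  obtain ⟨M, hM, hMm, hM'_sol, hM''_sol⟩ :=
    hm_sol_ext.exists_contDiff_two_solvesRenewal_deriv hm_loc (hK.const_smul φ) hV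
  have hMm_Ioi : EqOn M m (Ioi 0) := hMm.mono Ioi_subset_Ici_self
  have hM'm' : EqOn (deriv M) (deriv m) (Ioi 0) := hMm_Ioi.deriv isOpen_Ioi
  have hw₁_eq : EqOn (V 0 • φ • K + deriv V) w₁ (Ioi 0) := fun u hu ↦ by
    simp only [Pi.add_apply, Pi.smul_apply, smul_eq_mul, hw₁ u hu, hV0, hKf hu, hV'v hu]
    ring
  have hw₂_eq : EqOn ((V 0 * (φ • K) 0 + deriv V 0) • φ • K + deriv (V 0 • φ • K + deriv V)) w₂
      (Ioi 0) := fun u hu ↦ by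
    rw [Pi.add_apply, hw₁_eq.deriv isOpen_Ioi hu, hw₂ u hu, hV'0, hV0]
    simp only [Pi.smul_apply, smul_eq_mul, hK0, hKf hu]
    ring
  refine ⟨hM.contDiffOn.congr hMm_Ioi.symm, fun u hu ↦
    ⟨hM'_sol.apply_eq_mul_integral hKf hw₁_eq hM'm' hu, ?_⟩⟩
  simp only [iteratedDeriv_succ, iteratedDeriv_zero]
  exact hM''_sol.apply_eq_mul_integral hKf hw₂_eq (hM'm'.deriv isOpen_Ioi) hu

/-- under the same renewal hypotheses as Statement 2, with
`w₁(u) = φ m(0) f(u) + v'(u)` and `w₂(u) = φ m'(0) f(u) + w₁'(u)`, where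
`m(0) = v(0)` and `m'(0) = φ v(0) f(0) + v'(0)`: for all `u > 0`,
`m'(u) = φ ∫₀^u m'(u-y) f(y) dy + w₁(u)` and
`m''(u) = φ ∫₀^u m''(u-y) f(y) dy + w₂(u)`. -/
theorem stmt_4 (φ : ℝ) (hφ0 : 0 < φ) (hφ1 : φ < 1)
    (f F v m : ℝ → ℝ)
    (hf_nonneg : ∀ u : ℝ, 0 < u → 0 ≤ f u)
    (hf_integrable : MeasureTheory.IntegrableOn f (Set.Ioi 0))
    (hf_total : ∫ y in Set.Ioi (0:ℝ), f y = 1)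
    (hF_def : ∀ u : ℝ, 0 ≤ u → F u = ∫ y in (0:ℝ)..u, f y)
    (hFf : ∀ u : ℝ, 0 < u → HasDerivAt F (f u) u)
    (hv_loc : ∀ x : ℝ, 0 < x → ∃ M, ∀ u ∈ Set.Icc (0:ℝ) x, |v u| ≤ M)
    (hm_loc : ∀ x : ℝ, 0 < x → ∃ M, ∀ u ∈ Set.Icc (0:ℝ) x, |m u| ≤ M)
    (hm_eq : ∀ u : ℝ, 0 ≤ u →
      m u = φ * (∫ y in (0:ℝ)..u, m (u - y) * f y) + v u)
    (hF_c : ContinuousOn F (Set.Ici 0)) (hF_cd : ContDiffOn ℝ 2 F (Set.Ioi 0))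
    (hF_lim : ∀ k ≤ 2, ∃ L, Tendsto (iteratedDeriv k F) (𝓝[>] (0:ℝ)) (𝓝 L))
    (hv_c : ContinuousOn v (Set.Ici 0)) (hv_cd : ContDiffOn ℝ 2 v (Set.Ioi 0))
    (hv_lim : ∀ k ≤ 2, ∃ L, Tendsto (iteratedDeriv k v) (𝓝[>] (0:ℝ)) (𝓝 L))
    (f0 v'0 : ℝ)
    (hf0 : Tendsto f (𝓝[>] (0:ℝ)) (𝓝 f0))
    (hv'0 : Tendsto (deriv v) (𝓝[>] (0:ℝ)) (𝓝 v'0))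
    (w₁ w₂ : ℝ → ℝ)
    (hw₁ : ∀ u : ℝ, w₁ u = φ * v 0 * f u + deriv v u)
    (hw₂ : ∀ u : ℝ, w₂ u = φ * (φ * v 0 * f0 + v'0) * f u + deriv w₁ u) :
    ∀ u : ℝ, 0 < u →
      (deriv m u = φ * (∫ y in (0:ℝ)..u, deriv m (u - y) * f y) + w₁ u) ∧
      (iteratedDeriv 2 m u
        = φ * (∫ y in (0:ℝ)..u, iteratedDeriv 2 m (u - y) * f y) + w₂ u) :=
  (stmt_4_general φ f v m (contDiffOn_of_hasDerivAt isOpen_Ioi hFf (mod_cast hF_cd))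
    ((hF_lim 2 le_rfl).imp fun _ hL ↦
      hL.congr' (eqOn_iteratedDeriv_succ_of_hasDerivAt isOpen_Ioi hFf).eventuallyEq_nhdsWithin)
    hv_c hv_cd (hv_lim 2 le_rfl) hm_loc hm_eq f0 v'0 hf0 hv'0 w₁ w₂
    (fun u _ ↦ hw₁ u) (fun u _ ↦ hw₂ u)).2
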